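/- Let K ≥ 2, τ > 0, and β ∈ ℝ^K with all β_i > 0, and let X have the Concrete distribution C(β, τ). Then for all indices i, k, the log-ratio variance satisfies Var[log(X_i/X_k)] = (π²/(3τ²))(1 − δ_{ik}), where δ is the Kronecker delta. -/

import Mathlib

open MeasureTheory Finset

noncomputable def fillMap (K : ℕ) (u : Fin (K - 1) → ℝ) : Fin K → ℝ :=
  fun i => if h : (i : ℕ) < K - 1 then u ⟨i, h⟩ else 1 - ∑ j, u j

/-- The `(K-1)`-dimensional Lebesgue measure on the probability simplex `S_K`. -/
noncomputable def simplexMeasure (K : ℕ) : Measure (Fin K → ℝ) :=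
  Measure.map (fillMap K)
    (volume.restrict {u : Fin (K - 1) → ℝ | (∀ j, 0 ≤ u j) ∧ ∑ j, u j ≤ 1})

/-- The density of the Concrete distribution `C(β, τ)` on the simplex. -/
noncomputable def concreteDensity (K : ℕ) (β : Fin K → ℝ) (τ : ℝ) (x : Fin K → ℝ) : ℝ :=
  (Nat.factorial (K - 1) : ℝ) * τ ^ (K - 1) * (∑ j, β j / x j ^ τ) ^ (-(K : ℝ)) *
    ∏ i, β i / x i ^ (τ + 1)

/-- Kronecker delta. -/
def kd {K : ℕ} (a b : Fin K) : ℝ := if a = b then 1 else 0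

open ProbabilityTheory Filter
open scoped Topology

/-!
Let `y₁, …, y_K` be independent Fréchet variables (exponentials of Gumbel variables), where `yⱼ` has
distribution function `exp (-βⱼ y ^ (-τ))`. Then `y / ∑ⱼ yⱼ` has the Concrete distribution: in the
coordinates `y = S • x` with `x` in the simplex, the integral of the joint density over `S` is a
Gamma integral whose value is the Concrete density. Hence `log (Xᵢ / X_k)` is distributed as
`log yᵢ - log y_k`, a difference of independent variables when `i ≠ k`.

The moment generating function of `log yⱼ` is `M(t) = βⱼ ^ (t / τ) Γ(1 - t / τ)`, so Euler's
reflection formula gives `M(t) M(-t) sin(πt / τ) = πt / τ`. Comparing Taylor coefficients to third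
order yields `(t ↦ M(t) M(-t))''(0) = π² / (3τ²)`, which is twice the variance of `log yⱼ`.
-/

section VarianceOfMGF

variable {Ω : Type*} {mΩ : MeasurableSpace Ω} {μ : Measure Ω} {X : Ω → ℝ} {a : ℝ}

lemma variance_eq_half_iteratedDeriv_mgf_mul_mgf_neg [IsProbabilityMeasure μ]
    (hX : 0 ∈ interior (integrableExpSet X μ)) :
    Var[X; μ] = iteratedDeriv 2 (fun t ↦ mgf X μ t * mgf X μ (-t)) 0 / 2 := by
  have hmgf : ContDiffAt ℝ 2 (mgf X μ) 0 := (analyticAt_mgf hX).contDiffAt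
  have hmgf_neg : ContDiffAt ℝ 2 (fun t ↦ mgf X μ (-t)) 0 :=
    ContDiffAt.comp (g := mgf X μ) 0 (by rwa [neg_zero]) contDiffAt_id.neg
  have hderiv (m : ℕ) : iteratedDeriv m (mgf X μ) 0 = ∫ ω, (X ^ m) ω ∂μ :=
    iteratedDeriv_mgf_zero hX m
  rw [iteratedDeriv_fun_mul hmgf hmgf_neg,
    variance_eq_sub (mod_cast memLp_of_mem_interior_integrableExpSet hX 2)]
  simp only [sum_range_succ, range_zero, sum_empty, iteratedDeriv_comp_neg, neg_zero, hderiv,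
    Pi.pow_apply, pow_zero, pow_one, integral_const, probReal_univ, smul_eq_mul,
    Nat.choose_zero_right, Nat.choose_succ_self_right, Nat.choose_self, Nat.sub_zero,
    Nat.add_one_sub_one, Nat.sub_self]
  push_cast
  ring

lemma iteratedDeriv_two_eq_of_mul_sin_eventuallyEq {f : ℝ → ℝ} (ha : a ≠ 0)
    (hf : ContDiffAt ℝ 3 f 0) (h : ∀ᶠ t in 𝓝 0, f t * Real.sin (a * t) = a * t) :
    iteratedDeriv 2 f 0 = a ^ 2 / 3 := by
  have leibniz (m : ℕ) (hm : m ≤ 3) :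
      ∑ i ∈ range (m + 1), m.choose i * iteratedDeriv i f 0 *
        (a ^ (m - i) * iteratedDeriv (m - i) Real.sin 0) =
      iteratedDeriv m (fun t ↦ a * t) 0 := by
    have hm' : (m : WithTop ℕ∞) ≤ 3 := mod_cast hm
    rw [← EventuallyEq.iteratedDeriv_eq m h, iteratedDeriv_fun_mul (hf.of_le hm') (by fun_prop)]
    simp only [iteratedDeriv_comp_const_mul Real.contDiff_sin, mul_zero]
  have order_one : f 0 * a = a := by
    simpa [sum_range_succ] using leibniz 1 (by norm_num)
  have order_three : -(f 0 * a ^ 3) + 3 * iteratedDeriv 2 f 0 * a = 0 := by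
    simpa [sum_range_succ, Nat.choose, iteratedDeriv_const_mul_field a (fun t ↦ t),
      iteratedDeriv_fun_id] using
      leibniz 3 le_rfl
  apply mul_right_cancel₀ ha
  linear_combination order_three / 3 + a ^ 2 / 3 * order_one

lemma variance_eq_of_mgf_mul_mgf_neg_mul_sin_eventuallyEq [IsProbabilityMeasure μ] (ha : a ≠ 0)
    (hX : 0 ∈ interior (integrableExpSet X μ))
    (h : ∀ᶠ t in 𝓝 0, mgf X μ t * mgf X μ (-t) * Real.sin (a * t) = a * t) :
    Var[X; μ] = a ^ 2 / 6 := by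
  have hmgf : ContDiffAt ℝ 3 (mgf X μ) 0 := (analyticAt_mgf hX).contDiffAt
  have hmgf_neg : ContDiffAt ℝ 3 (fun t ↦ mgf X μ (-t)) 0 :=
    ContDiffAt.comp (g := mgf X μ) 0 (by rwa [neg_zero]) contDiffAt_id.neg
  rw [variance_eq_half_iteratedDeriv_mgf_mul_mgf_neg hX,
    iteratedDeriv_two_eq_of_mul_sin_eventuallyEq ha (hmgf.mul hmgf_neg) h]
  ring

end VarianceOfMGF

section Gamma

lemma Gamma_one_sub_mul_Gamma_one_add_mul_sin {x : ℝ} (hx : |x| < 1) :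
    Real.Gamma (1 - x) * Real.Gamma (1 + x) * Real.sin (Real.pi * x) = Real.pi * x := by
  obtain ⟨hx_gt, hx_lt⟩ := abs_lt.mp hx
  rcases eq_or_ne x 0 with rfl | hx0
  · simp
  have hsin : Real.sin (Real.pi * x) ≠ 0 := by
    rw [ne_eq, Real.sin_eq_zero_iff_of_lt_of_lt (by nlinarith [Real.pi_pos])
      (by nlinarith [Real.pi_pos])]
    exact mul_ne_zero Real.pi_ne_zero hx0
  have reflection : Real.Gamma x * Real.Gamma (1 - x) * Real.sin (Real.pi * x) = Real.pi := by
    rw [Real.Gamma_mul_Gamma_one_sub, div_mul_cancel₀ _ hsin]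
  rw [add_comm, Real.Gamma_add_one hx0]
  linear_combination x * reflection

lemma integral_rpow_mul_exp_neg_mul_rpow_neg_Ioi {p a b : ℝ} (hp : 0 < p) (ha : 0 < a)
    (hb : 0 < b) :
    ∫ y in Set.Ioi (0 : ℝ), p * y ^ (-(p * a) - 1) * Real.exp (-(b * y ^ (-p))) =
      (1 / b) ^ a * Real.Gamma a := by
  rw [← Real.integral_rpow_mul_exp_neg_mul_Ioi ha hb, ← integral_comp_rpow_Ioi
    (fun z ↦ z ^ (a - 1) * Real.exp (-(b * z))) (neg_ne_zero.mpr hp.ne')]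
  refine setIntegral_congr_fun measurableSet_Ioi fun y (hy : 0 < y) ↦ ?_
  have hexp : y ^ (-(p * a) - 1) = y ^ (-p - 1) * (y ^ (-p)) ^ (a - 1) := by
    rw [← Real.rpow_mul hy.le, ← Real.rpow_add hy]
    congr 1
    ring
  simp only [smul_eq_mul, abs_neg, abs_of_pos hp, hexp]
  ring

lemma lintegral_rpow_mul_exp_neg_mul_rpow_neg_Ioi {p a b : ℝ} (hp : 0 < p) (ha : 0 < a)
    (hb : 0 < b) :
    ∫⁻ y in Set.Ioi (0 : ℝ),
        ENNReal.ofReal (p * y ^ (-(p * a) - 1) * Real.exp (-(b * y ^ (-p)))) =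
      ENNReal.ofReal ((1 / b) ^ a * Real.Gamma a) := by
  have hval := integral_rpow_mul_exp_neg_mul_rpow_neg_Ioi hp ha hb
  have hne : (1 / b) ^ a * Real.Gamma a ≠ 0 := by positivity
  rw [← hval, ofReal_integral_eq_lintegral_ofReal (Integrable.of_integral_ne_zero (hval ▸ hne))]
  filter_upwards [ae_restrict_mem measurableSet_Ioi] with y hy
  have hy : 0 < y := hy
  simp only [Pi.zero_apply]
  positivity

end Gamma

lemma integral_withDensity_ofReal {α : Type*} {mα : MeasurableSpace α} {μ : Measure α}
    {f : α → ℝ} (hf : Measurable f) (hf_nonneg : 0 ≤ᵐ[μ] f) (g : α → ℝ) :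
    ∫ x, g x ∂μ.withDensity (fun x ↦ ENNReal.ofReal (f x)) = ∫ x, g x * f x ∂μ := by
  rw [integral_withDensity_eq_integral_toReal_smul hf.ennreal_ofReal
    (ae_of_all _ fun _ ↦ ENNReal.ofReal_lt_top)]
  refine integral_congr_ae ?_
  filter_upwards [hf_nonneg] with x hx
  rw [ENNReal.toReal_ofReal hx, smul_eq_mul, mul_comm]

section Frechet

variable {b τ t : ℝ}

/-- Density of the Fréchet distribution with shape `τ`, whose distribution function is
`y ↦ exp (-b * y ^ (-τ))` on the positive half-line. Its logarithm has a Gumbel distribution. -/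
noncomputable def frechetPDFReal (b τ y : ℝ) : ℝ :=
  if 0 < y then b * τ * y ^ (-τ - 1) * Real.exp (-(b * y ^ (-τ))) else 0

/-- The `ℝ≥0∞`-valued version of `frechetPDFReal`. -/
noncomputable def frechetPDF (b τ y : ℝ) : ENNReal := ENNReal.ofReal (frechetPDFReal b τ y)

/-- The Fréchet distribution with density `frechetPDF`. -/
noncomputable def frechetMeasure (b τ : ℝ) : Measure ℝ := volume.withDensity (frechetPDF b τ)

lemma measurable_frechetPDFReal (b τ : ℝ) : Measurable (frechetPDFReal b τ) :=
  Measurable.ite measurableSet_Ioi (by fun_prop) measurable_const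

lemma measurable_frechetPDF (b τ : ℝ) : Measurable (frechetPDF b τ) :=
  (measurable_frechetPDFReal b τ).ennreal_ofReal

lemma frechetPDFReal_nonneg (hb : 0 ≤ b) (hτ : 0 ≤ τ) (y : ℝ) : 0 ≤ frechetPDFReal b τ y := by
  unfold frechetPDFReal
  split_ifs <;> positivity

lemma frechetPDFReal_mul {S x : ℝ} (hS : 0 < S) (hx : 0 < x) :
    frechetPDFReal b τ (S * x) =
      b / x ^ (τ + 1) * (τ * S ^ (-τ - 1) * Real.exp (-(b / x ^ τ * S ^ (-τ)))) := by
  rw [frechetPDFReal, if_pos (mul_pos hS hx), Real.mul_rpow hS.le hx.le, Real.mul_rpow hS.le hx.le,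
    ← neg_add', Real.rpow_neg hx.le, Real.rpow_neg hx.le]
  simp only [div_eq_mul_inv]
  ring_nf

lemma frechetPDF_of_nonpos {y : ℝ} (hy : y ≤ 0) : frechetPDF b τ y = 0 := by
  rw [frechetPDF, frechetPDFReal, if_neg hy.not_gt, ENNReal.ofReal_zero]

instance sigmaFinite_frechetMeasure : SigmaFinite (frechetMeasure b τ) :=
  SigmaFinite.withDensity_of_ne_top (ae_of_all _ fun _ ↦ ENNReal.ofReal_ne_top)

lemma ae_pos_frechetMeasure (b τ : ℝ) : ∀ᵐ y ∂frechetMeasure b τ, 0 < y := by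
  rw [frechetMeasure, ae_withDensity_iff (measurable_frechetPDF b τ)]
  refine ae_of_all _ fun y hy ↦ ?_
  contrapose! hy
  exact frechetPDF_of_nonpos hy

lemma mgf_log_frechetMeasure (hb : 0 < b) (hτ : 0 < τ) (ht : t < τ) :
    mgf Real.log (frechetMeasure b τ) t = b ^ (t / τ) * Real.Gamma (1 - t / τ) := by
  have hshape : 0 < 1 - t / τ := sub_pos.mpr ((div_lt_one hτ).mpr ht)
  have hintegrand : (fun y ↦ Real.exp (t * Real.log y) * frechetPDFReal b τ y) =
      (Set.Ioi 0).indicator fun y ↦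
        b * (τ * y ^ (-(τ * (1 - t / τ)) - 1) * Real.exp (-(b * y ^ (-τ)))) := by
    ext y
    rcases lt_or_ge 0 y with hy | hy
    · have hpow : y ^ (-(τ * (1 - t / τ)) - 1) = y ^ t * y ^ (-τ - 1) := by
        rw [← Real.rpow_add hy]
        congr 1
        field
      rw [Set.indicator_of_mem (Set.mem_Ioi.mpr hy), frechetPDFReal, if_pos hy, mul_comm t,
        ← Real.rpow_def_of_pos hy, hpow]
      ring
    · rw [Set.indicator_of_notMem (Set.notMem_Ioi.mpr hy), frechetPDFReal, if_neg hy.not_gt,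
        mul_zero]
  have hscale : b * (1 / b) ^ (1 - t / τ) = b ^ (t / τ) := calc
    b * (1 / b) ^ (1 - t / τ) = b ^ (1 : ℝ) * b ^ (-(1 - t / τ)) := by
      rw [Real.rpow_one, Real.rpow_neg hb.le, one_div, Real.inv_rpow hb.le]
    _ = b ^ (t / τ) := by
      rw [← Real.rpow_add hb]
      congr 1
      ring
  unfold mgf frechetMeasure frechetPDF
  rw [integral_withDensity_ofReal (measurable_frechetPDFReal b τ)
    (ae_of_all _ (frechetPDFReal_nonneg hb.le hτ.le)), hintegrand,
    integral_indicator measurableSet_Ioi, integral_const_mul,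
    integral_rpow_mul_exp_neg_mul_rpow_neg_Ioi hτ hshape hb, ← mul_assoc, hscale]

lemma isProbabilityMeasure_frechetMeasure (hb : 0 < b) (hτ : 0 < τ) :
    IsProbabilityMeasure (frechetMeasure b τ) := by
  have hmass := mgf_log_frechetMeasure hb hτ hτ
  rw [mgf_zero', zero_div, Real.rpow_zero, sub_zero, Real.Gamma_one, mul_one] at hmass
  exact isProbabilityMeasure_iff_real.mpr hmass

lemma zero_mem_interior_integrableExpSet_log_frechetMeasure (hb : 0 < b) (hτ : 0 < τ) :
    0 ∈ interior (integrableExpSet Real.log (frechetMeasure b τ)) := by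
  refine interior_maximal (fun t (ht : t < τ) ↦ ?_) isOpen_Iio (Set.mem_Iio.mpr hτ)
  apply Integrable.of_integral_ne_zero
  change mgf Real.log (frechetMeasure b τ) t ≠ 0
  have hshape : 0 < 1 - t / τ := sub_pos.mpr ((div_lt_one hτ).mpr ht)
  rw [mgf_log_frechetMeasure hb hτ ht]
  positivity

lemma variance_log_frechetMeasure (hb : 0 < b) (hτ : 0 < τ) :
    Var[Real.log; frechetMeasure b τ] = Real.pi ^ 2 / (6 * τ ^ 2) := by
  have := isProbabilityMeasure_frechetMeasure hb hτ
  have hprod : ∀ᶠ t in 𝓝 0, mgf Real.log (frechetMeasure b τ) t *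
      mgf Real.log (frechetMeasure b τ) (-t) * Real.sin (Real.pi / τ * t) = Real.pi / τ * t := by
    filter_upwards [Ioo_mem_nhds (neg_lt_zero.mpr hτ) hτ] with t ⟨ht_gt, ht_lt⟩
    have ht : |t / τ| < 1 := by
      rw [abs_div, abs_of_pos hτ, div_lt_one hτ]
      exact abs_lt.mpr ⟨ht_gt, ht_lt⟩
    have hscale : b ^ (t / τ) * b ^ (-t / τ) = 1 := by
      rw [← Real.rpow_add hb, neg_div, add_neg_cancel, Real.rpow_zero]
    have reflection := Gamma_one_sub_mul_Gamma_one_add_mul_sin ht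
    rw [mgf_log_frechetMeasure hb hτ ht_lt, mgf_log_frechetMeasure hb hτ (neg_lt.mp ht_gt),
      show 1 - -t / τ = 1 + t / τ by ring, show Real.pi / τ * t = Real.pi * (t / τ) by ring]
    linear_combination b ^ (t / τ) * b ^ (-t / τ) * reflection + Real.pi * (t / τ) * hscale
  rw [variance_eq_of_mgf_mul_mgf_neg_mul_sin_eventuallyEq (div_ne_zero Real.pi_ne_zero hτ.ne')
    (zero_mem_interior_integrableExpSet_log_frechetMeasure hb hτ) hprod]
  ring

end Frechet

section ProductDensity

lemma lintegral_fin_prod_eq_prod {n : ℕ} {α : Fin n → Type*} {mα : ∀ i, MeasurableSpace (α i)}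
    (μ : ∀ i, Measure (α i)) [∀ i, SigmaFinite (μ i)] {f : ∀ i, α i → ENNReal}
    (hf : ∀ i, Measurable (f i)) :
    ∫⁻ x, ∏ i, f i (x i) ∂Measure.pi μ = ∏ i, ∫⁻ x, f i x ∂μ i := by
  induction n with
  | zero => simp
  | succ n ih =>
    have htail : Measurable fun x : ∀ i, α (Fin.succAbove 0 i) ↦ ∏ i, f (Fin.succAbove 0 i) (x i) :=
      Finset.measurable_prod _ fun i _ ↦ (hf _).comp (measurable_pi_apply i)
    rw [← (measurePreserving_piFinSuccAbove μ 0).symm.lintegral_comp_emb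
      (MeasurableEquiv.measurableEmbedding _)]
    simp only [Fin.prod_univ_succAbove _ 0, MeasurableEquiv.piFinSuccAbove_symm_apply,
      Fin.insertNthEquiv_apply, Fin.insertNth_apply_same, Fin.insertNth_apply_succAbove]
    rw [lintegral_prod_mul (hf 0).aemeasurable htail.aemeasurable,
      ih (fun i ↦ μ (Fin.succAbove 0 i)) fun i ↦ hf (Fin.succAbove 0 i)]

variable {ι : Type*} [Fintype ι] {α : ι → Type*} {mα : ∀ i, MeasurableSpace (α i)}
  (μ : ∀ i, Measure (α i)) [∀ i, SigmaFinite (μ i)] {f : ∀ i, α i → ENNReal}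

lemma lintegral_fintype_prod_eq_prod (hf : ∀ i, Measurable (f i)) :
    ∫⁻ x, ∏ i, f i (x i) ∂Measure.pi μ = ∏ i, ∫⁻ x, f i x ∂μ i := by
  let e := (Fintype.equivFin ι).symm
  rw [← (measurePreserving_piCongrLeft μ e).lintegral_comp_emb
    (MeasurableEquiv.measurableEmbedding _)]
  simp_rw [← e.prod_comp, MeasurableEquiv.coe_piCongrLeft, Equiv.piCongrLeft_apply_apply]
  exact lintegral_fin_prod_eq_prod (fun j ↦ μ (e j)) fun j ↦ hf (e j)

lemma pi_withDensity [∀ i, SigmaFinite ((μ i).withDensity (f i))] (hf : ∀ i, Measurable (f i)) :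
    Measure.pi (fun i ↦ (μ i).withDensity (f i)) =
      (Measure.pi μ).withDensity fun x ↦ ∏ i, f i (x i) := by
  refine Measure.pi_eq fun s hs ↦ ?_
  rw [withDensity_apply _ (MeasurableSet.univ_pi hs), Measure.restrict_pi_pi,
    lintegral_fintype_prod_eq_prod _ hf]
  exact prod_congr rfl fun i _ ↦ (withDensity_apply _ (hs i)).symm

end ProductDensity

section PiFrechet

variable {ι : Type*} [Fintype ι] {β : ι → ℝ} {τ : ℝ}

lemma measurable_prod_frechetPDF (β : ι → ℝ) (τ : ℝ) :
    Measurable fun y : ι → ℝ ↦ ∏ j, frechetPDF (β j) τ (y j) :=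
  Finset.measurable_prod _ fun j _ ↦ (measurable_frechetPDF _ _).comp (measurable_pi_apply j)

lemma lintegral_pi_frechetMeasure [Nonempty ι] {g : (ι → ℝ) → ENNReal} (hg : Measurable g) :
    ∫⁻ y, g y ∂Measure.pi (fun j ↦ frechetMeasure (β j) τ) =
      ∫⁻ y in Set.Ioi 0, (∏ j, frechetPDF (β j) τ (y j)) * g y := by
  have hsigma (j : ι) : SigmaFinite (volume.withDensity (frechetPDF (β j) τ)) :=
    sigmaFinite_frechetMeasure
  unfold frechetMeasure
  rw [pi_withDensity _ fun j ↦ measurable_frechetPDF _ _, ← volume_pi,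
    lintegral_withDensity_eq_lintegral_mul _ (measurable_prod_frechetPDF β τ) hg]
  refine (setLIntegral_eq_of_support_subset fun y hy ↦ ?_).symm
  have hpos (j : ι) : 0 < y j := by
    contrapose! hy
    have hzero : ∏ j, frechetPDF (β j) τ (y j) = 0 :=
      prod_eq_zero (mem_univ j) (frechetPDF_of_nonpos hy)
    rw [Function.notMem_support, Pi.mul_apply, hzero, zero_mul]
  exact lt_of_strongLT hpos

lemma ae_pos_pi_frechetMeasure (hτ : 0 < τ) (hβ : ∀ j, 0 < β j) :
    ∀ᵐ y ∂Measure.pi fun j ↦ frechetMeasure (β j) τ, ∀ j, 0 < y j := by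
  have (j : ι) := isProbabilityMeasure_frechetMeasure (hβ j) hτ
  exact ae_all_iff.mpr fun j ↦
    (measurePreserving_eval _ j).quasiMeasurePreserving.ae (ae_pos_frechetMeasure (β j) τ)

lemma memLp_log_eval_pi_frechetMeasure (hτ : 0 < τ) (hβ : ∀ j, 0 < β j) (i : ι) :
    MemLp (fun y ↦ Real.log (y i)) 2 (Measure.pi fun j ↦ frechetMeasure (β j) τ) := by
  have (j : ι) := isProbabilityMeasure_frechetMeasure (hβ j) hτ
  have hlog : MemLp Real.log 2 (frechetMeasure (β i) τ) := mod_cast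
    memLp_of_mem_interior_integrableExpSet
      (zero_mem_interior_integrableExpSet_log_frechetMeasure (hβ i) hτ) 2
  exact hlog.comp_measurePreserving (measurePreserving_eval (fun j ↦ frechetMeasure (β j) τ) i)

lemma variance_log_eval_pi_frechetMeasure (hτ : 0 < τ) (hβ : ∀ j, 0 < β j) (i : ι) :
    Var[fun y ↦ Real.log (y i); Measure.pi fun j ↦ frechetMeasure (β j) τ] =
      Real.pi ^ 2 / (6 * τ ^ 2) := by
  have (j : ι) := isProbabilityMeasure_frechetMeasure (hβ j) hτ
  rw [← variance_log_frechetMeasure (hβ i) hτ]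
  exact (measurePreserving_eval (fun j ↦ frechetMeasure (β j) τ) i).variance_fun_comp
    Real.measurable_log.aemeasurable

lemma variance_log_sub_log_pi_frechetMeasure (hτ : 0 < τ) (hβ : ∀ j, 0 < β j) {i k : ι}
    (hik : i ≠ k) :
    Var[fun y ↦ Real.log (y i) - Real.log (y k); Measure.pi fun j ↦ frechetMeasure (β j) τ] =
      Real.pi ^ 2 / (3 * τ ^ 2) := by
  have (j : ι) := isProbabilityMeasure_frechetMeasure (hβ j) hτ
  have hindep : (fun y ↦ Real.log (y i)) ⟂ᵢ[Measure.pi fun j ↦ frechetMeasure (β j) τ]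
      fun y ↦ Real.log (y k) :=
    (iIndepFun_pi fun _ ↦ Real.measurable_log.aemeasurable).indepFun hik
  have hmemLp := memLp_log_eval_pi_frechetMeasure hτ hβ
  rw [variance_fun_sub (hmemLp i) (hmemLp k), hindep.covariance_eq_zero (hmemLp i) (hmemLp k),
    variance_log_eval_pi_frechetMeasure hτ hβ, variance_log_eval_pi_frechetMeasure hτ hβ]
  ring

end PiFrechet

section PolarCoordinates

variable {n : ℕ}

lemma measurable_finSnoc {α : Type*} {mα : MeasurableSpace α} {f : α → Fin n → ℝ} {g : α → ℝ}
    (hf : Measurable f) (hg : Measurable g) :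
    Measurable fun a ↦ (Fin.snoc (f a) (g a) : Fin (n + 1) → ℝ) := by
  refine measurable_pi_lambda _ (Fin.lastCases ?_ fun i ↦ ?_)
  · simpa only [Fin.snoc_last] using hg
  · simpa only [Fin.snoc_castSucc] using measurable_pi_iff.mp hf i

lemma fillMap_succ_eq_snoc (u : Fin n → ℝ) : fillMap (n + 1) u = Fin.snoc u (1 - ∑ j, u j) := rfl

lemma measurable_fillMap_succ : Measurable (fillMap (n + 1)) :=
  measurable_finSnoc measurable_id (by fun_prop)

lemma sum_fillMap_succ (u : Fin n → ℝ) : ∑ j, fillMap (n + 1) u j = 1 := by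
  simp [fillMap_succ_eq_snoc, Fin.sum_snoc]

lemma fillMap_succ_nonneg_iff {u : Fin n → ℝ} :
    0 ≤ fillMap (n + 1) u ↔ (∀ j, 0 ≤ u j) ∧ ∑ j, u j ≤ 1 := by
  simp [fillMap_succ_eq_snoc, Pi.le_def, Fin.forall_fin_succ']

lemma smul_fillMap_succ (S : ℝ) (u : Fin n → ℝ) :
    S • fillMap (n + 1) u = Fin.snoc (S • u) (S - ∑ j, (S • u) j) := by
  ext i
  refine Fin.lastCases ?_ (fun j ↦ ?_) i
  · simp [fillMap_succ_eq_snoc, mul_sub, mul_sum]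
  · simp [fillMap_succ_eq_snoc]

lemma lintegral_lintegral_snoc_sub_sum {H : (Fin (n + 1) → ℝ) → ENNReal} (hH : Measurable H) :
    ∫⁻ S, ∫⁻ v : Fin n → ℝ, H (Fin.snoc v (S - ∑ j, v j)) = ∫⁻ y, H y := by
  have hshear : Measurable fun p : ℝ × (Fin n → ℝ) ↦ H (Fin.snoc p.2 (p.1 - ∑ j, p.2 j)) :=
    hH.comp (measurable_finSnoc measurable_snd (by fun_prop))
  have hsnoc : Measurable fun p : ℝ × (Fin n → ℝ) ↦ H (Fin.snoc p.2 p.1) :=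
    hH.comp (measurable_finSnoc measurable_snd measurable_fst)
  calc ∫⁻ S, ∫⁻ v : Fin n → ℝ, H (Fin.snoc v (S - ∑ j, v j))
      = ∫⁻ v : Fin n → ℝ, ∫⁻ S, H (Fin.snoc v (S - ∑ j, v j)) :=
        lintegral_lintegral_swap hshear.aemeasurable
    _ = ∫⁻ v : Fin n → ℝ, ∫⁻ S, H (Fin.snoc v S) :=
        lintegral_congr fun v ↦ lintegral_sub_right_eq_self (fun S ↦ H (Fin.snoc v S)) _
    _ = ∫⁻ p : ℝ × (Fin n → ℝ), H (Fin.snoc p.2 p.1) :=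
        (lintegral_prod_symm _ hsnoc.aemeasurable).symm
    _ = ∫⁻ y, H y := by
        rw [← (volume_preserving_piFinSuccAbove (fun _ ↦ ℝ) (Fin.last n)).symm.lintegral_comp hH]
        exact lintegral_congr fun p ↦ congrArg H (Fin.insertNth_last' _ _).symm

lemma lintegral_comp_smul_fillMap_succ {H : (Fin (n + 1) → ℝ) → ENNReal} (hH : Measurable H)
    {S : ℝ} (hS : 0 < S) :
    ∫⁻ u : Fin n → ℝ, ENNReal.ofReal (S ^ n) * H (S • fillMap (n + 1) u) =
      ∫⁻ v : Fin n → ℝ, H (Fin.snoc v (S - ∑ j, v j)) := by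
  have hslice : Measurable fun v : Fin n → ℝ ↦ H (Fin.snoc v (S - ∑ j, v j)) :=
    hH.comp (measurable_finSnoc measurable_id (by fun_prop))
  have hjacobian : S ^ n * |(S ^ Module.finrank ℝ (Fin n → ℝ))⁻¹| = 1 := by
    rw [Module.finrank_fin_fun, abs_of_pos (by positivity), mul_inv_cancel₀ (by positivity)]
  have hscale := lintegral_map (μ := volume) hslice (measurable_const_smul S)
  rw [Measure.map_addHaar_smul _ hS.ne', lintegral_smul_measure, smul_eq_mul] at hscale
  simp only [smul_fillMap_succ]
  rw [lintegral_const_mul' _ _ ENNReal.ofReal_ne_top, ← hscale, ← mul_assoc,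
    ← ENNReal.ofReal_mul (by positivity), hjacobian, ENNReal.ofReal_one, one_mul]

lemma setLIntegral_sum_pos_eq_lintegral_fillMap_succ {H : (Fin (n + 1) → ℝ) → ENNReal}
    (hH : Measurable H) :
    ∫⁻ y in {y | 0 < ∑ j, y j}, H y =
      ∫⁻ u : Fin n → ℝ, ∫⁻ S in Set.Ioi (0 : ℝ),
        ENNReal.ofReal (S ^ n) * H (S • fillMap (n + 1) u) := by
  have hhalf : MeasurableSet {y : Fin (n + 1) → ℝ | 0 < ∑ j, y j} :=
    measurableSet_lt measurable_const (by fun_prop)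
  have hpolar : Measurable fun p : (Fin n → ℝ) × ℝ ↦
      ENNReal.ofReal (p.2 ^ n) * H (p.2 • fillMap (n + 1) p.1) :=
    Measurable.mul (by fun_prop)
      (hH.comp (measurable_snd.smul (measurable_fillMap_succ.comp measurable_fst)))
  rw [lintegral_lintegral_swap hpolar.aemeasurable, setLIntegral_congr_fun measurableSet_Ioi
    fun S hS ↦ lintegral_comp_smul_fillMap_succ hH hS, ← lintegral_indicator hhalf,
    ← lintegral_lintegral_snoc_sub_sum (hH.indicator hhalf),
    ← lintegral_indicator measurableSet_Ioi]
  refine lintegral_congr fun S ↦ ?_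
  by_cases hS : 0 < S <;> simp [Set.indicator, Fin.sum_snoc, hS]

lemma measurableSet_Ioi_pi {ι : Type*} [Countable ι] (a : ι → ℝ) : MeasurableSet (Set.Ioi a) := by
  rw [← Set.Ici_sdiff_left]
  exact measurableSet_Ici.diff (measurableSet_singleton a)

lemma measurableSet_solidSimplex :
    MeasurableSet {u : Fin n → ℝ | (∀ j, 0 ≤ u j) ∧ ∑ j, u j ≤ 1} := by
  simp only [← fillMap_succ_nonneg_iff]
  exact measurable_fillMap_succ measurableSet_Ici

lemma lintegral_simplexMeasure {g : (Fin (n + 1) → ℝ) → ENNReal} (hg : Measurable g) :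
    ∫⁻ x, g x ∂simplexMeasure (n + 1) =
      ∫⁻ u : Fin n → ℝ in {u | (∀ j, 0 ≤ u j) ∧ ∑ j, u j ≤ 1}, g (fillMap (n + 1) u) :=
  lintegral_map hg measurable_fillMap_succ

lemma smul_fillMap_succ_mem_Ioi_iff {S : ℝ} (hS : 0 < S) {u : Fin n → ℝ} :
    S • fillMap (n + 1) u ∈ Set.Ioi 0 ↔ (∀ j, 0 ≤ u j) ∧ ∑ j, u j ≤ 1 := by
  have hne : fillMap (n + 1) u ≠ 0 := fun h ↦ by simpa [h] using sum_fillMap_succ u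
  rw [Set.mem_Ioi, smul_pos_iff_of_pos_left hS, ← fillMap_succ_nonneg_iff, lt_iff_le_and_ne,
    and_iff_left hne.symm]

lemma setLIntegral_Ioi_eq_lintegral_simplexMeasure {H : (Fin (n + 1) → ℝ) → ENNReal}
    (hH : Measurable H) :
    ∫⁻ y in Set.Ioi 0, H y =
      ∫⁻ x, (∫⁻ S in Set.Ioi (0 : ℝ), ENNReal.ofReal (S ^ n) * H (S • x))
        ∂simplexMeasure (n + 1) := by
  have hsum_pos : Set.Ioi (0 : Fin (n + 1) → ℝ) ⊆ {y | 0 < ∑ j, y j} :=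
    fun y hy ↦ Fintype.sum_pos hy
  have hinner : Measurable fun x ↦ ∫⁻ S in Set.Ioi (0 : ℝ), ENNReal.ofReal (S ^ n) * H (S • x) :=
    Measurable.lintegral_prod_right' (f := fun p : (Fin (n + 1) → ℝ) × ℝ ↦
      ENNReal.ofReal (p.2 ^ n) * H (p.2 • p.1)) (by fun_prop)
  rw [← Set.inter_eq_self_of_subset_left hsum_pos,
    ← setLIntegral_indicator (measurableSet_Ioi_pi 0),
    setLIntegral_sum_pos_eq_lintegral_fillMap_succ (hH.indicator (measurableSet_Ioi_pi 0)),
    lintegral_simplexMeasure hinner, ← lintegral_indicator measurableSet_solidSimplex]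
  refine lintegral_congr fun u ↦ ?_
  by_cases hu : (∀ j, 0 ≤ u j) ∧ ∑ j, u j ≤ 1
  · rw [Set.indicator_of_mem (by exact hu)]
    refine setLIntegral_congr_fun measurableSet_Ioi fun S hS ↦ ?_
    simp only [Set.indicator_of_mem ((smul_fillMap_succ_mem_Ioi_iff hS).mpr hu)]
  · rw [Set.indicator_of_notMem (by exact hu)]
    refine setLIntegral_eq_zero measurableSet_Ioi fun S hS ↦ ?_
    simp only [Set.indicator_of_notMem (mt (smul_fillMap_succ_mem_Ioi_iff hS).mp hu), mul_zero,
      Pi.zero_apply]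

lemma ae_simplexMeasure_nonneg : ∀ᵐ x ∂simplexMeasure (n + 1), 0 ≤ x := by
  refine (ae_map_iff measurable_fillMap_succ.aemeasurable measurableSet_Ici).mpr ?_
  filter_upwards [ae_restrict_mem measurableSet_solidSimplex] with u hu
  exact fillMap_succ_nonneg_iff.mpr hu

lemma ae_simplexMeasure_sum_eq_one : ∀ᵐ x ∂simplexMeasure (n + 1), ∑ j, x j = 1 :=
  (ae_map_iff measurable_fillMap_succ.aemeasurable
    (measurableSet_eq_fun (by fun_prop) measurable_const)).mpr (ae_of_all _ sum_fillMap_succ)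

end PolarCoordinates

section ConcreteDensity

variable {K : ℕ} {β : Fin K → ℝ} {τ : ℝ}

/-- The Concrete distribution `C(β, τ)`, as a measure on `ℝ^K` carried by the simplex. -/
noncomputable def concreteMeasure (K : ℕ) (β : Fin K → ℝ) (τ : ℝ) : Measure (Fin K → ℝ) :=
  (simplexMeasure K).withDensity fun x ↦ ENNReal.ofReal (concreteDensity K β τ x)

lemma measurable_concreteDensity (K : ℕ) (β : Fin K → ℝ) (τ : ℝ) :
    Measurable (concreteDensity K β τ) := by
  unfold concreteDensity
  fun_prop

lemma concreteDensity_nonneg (hτ : 0 ≤ τ) (hβ : 0 ≤ β) {x : Fin K → ℝ} (hx : 0 ≤ x) :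
    0 ≤ concreteDensity K β τ x := by
  have hratio (s : ℝ) (j : Fin K) : 0 ≤ β j / x j ^ s :=
    div_nonneg (hβ j) (Real.rpow_nonneg (hx j) s)
  have hsum : 0 ≤ ∑ j, β j / x j ^ τ := sum_nonneg fun j _ ↦ hratio τ j
  have hprod : 0 ≤ ∏ j, β j / x j ^ (τ + 1) := prod_nonneg fun j _ ↦ hratio (τ + 1) j
  unfold concreteDensity
  positivity

lemma concreteDensity_eq_zero (hτ : τ + 1 ≠ 0) {x : Fin K → ℝ} {j : Fin K} (hj : x j = 0) :
    concreteDensity K β τ x = 0 := by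
  rw [concreteDensity, prod_eq_zero (mem_univ j), mul_zero]
  -- The factor at `j` is the junk value `β j / 0 = 0`.
  rw [hj, Real.zero_rpow hτ, div_zero]

end ConcreteDensity

section Normalization

variable {n : ℕ} {β x : Fin (n + 1) → ℝ} {τ : ℝ}

lemma pow_mul_prod_frechetPDFReal_smul (hx : ∀ j, 0 < x j) {S : ℝ} (hS : 0 < S) :
    S ^ n * ∏ j, frechetPDFReal (β j) τ ((S • x) j) =
      τ ^ n * (∏ j, β j / x j ^ (τ + 1)) *
        (τ * S ^ (-(τ * (n + 1)) - 1) * Real.exp (-((∑ j, β j / x j ^ τ) * S ^ (-τ)))) := by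
  have hpow : S ^ (-(τ * (n + 1)) - 1) = S ^ n * (S ^ (-τ - 1)) ^ (n + 1) := by
    rw [← Real.rpow_natCast, ← Real.rpow_mul_natCast hS.le, ← Real.rpow_add hS]
    push_cast
    ring_nf
  simp only [Pi.smul_apply, smul_eq_mul, frechetPDFReal_mul hS (hx _), prod_mul_distrib,
    prod_const, card_univ, Fintype.card_fin, ← Real.exp_sum, sum_neg_distrib, ← sum_mul, hpow]
  ring

lemma lintegral_pow_mul_prod_frechetPDF_smul_of_pos (hτ : 0 < τ) (hβ : ∀ j, 0 < β j)
    (hx : ∀ j, 0 < x j) :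
    ∫⁻ S in Set.Ioi (0 : ℝ), ENNReal.ofReal (S ^ n) * ∏ j, frechetPDF (β j) τ ((S • x) j) =
      ENNReal.ofReal (concreteDensity (n + 1) β τ x) := by
  have hsum : 0 < ∑ j, β j / x j ^ τ :=
    sum_pos (fun j _ ↦ div_pos (hβ j) (Real.rpow_pos_of_pos (hx j) τ)) univ_nonempty
  have hcoeff : 0 ≤ τ ^ n * ∏ j, β j / x j ^ (τ + 1) :=
    mul_nonneg (by positivity) <| prod_nonneg fun j _ ↦
      div_nonneg (hβ j).le (Real.rpow_nonneg (hx j).le _)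
  have hintegrand {S : ℝ} (hS : 0 < S) :
      ENNReal.ofReal (S ^ n) * ∏ j, frechetPDF (β j) τ ((S • x) j) =
        ENNReal.ofReal (τ ^ n * ∏ j, β j / x j ^ (τ + 1)) * ENNReal.ofReal
          (τ * S ^ (-(τ * (n + 1)) - 1) * Real.exp (-((∑ j, β j / x j ^ τ) * S ^ (-τ)))) := by
    simp only [frechetPDF]
    rw [← ENNReal.ofReal_prod_of_nonneg fun j _ ↦ frechetPDFReal_nonneg (hβ j).le hτ.le _,
      ← ENNReal.ofReal_mul (by positivity), pow_mul_prod_frechetPDFReal_smul hx hS,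
      ENNReal.ofReal_mul hcoeff]
  rw [setLIntegral_congr_fun measurableSet_Ioi fun S hS ↦ hintegrand hS,
    lintegral_const_mul' _ _ ENNReal.ofReal_ne_top,
    lintegral_rpow_mul_exp_neg_mul_rpow_neg_Ioi hτ n.cast_add_one_pos hsum,
    ← ENNReal.ofReal_mul hcoeff, Real.Gamma_nat_eq_factorial, concreteDensity, one_div,
    Real.inv_rpow hsum.le, ← Real.rpow_neg hsum.le]
  push_cast
  congr 1
  ring

lemma lintegral_pow_mul_prod_frechetPDF_smul (hτ : 0 < τ) (hβ : ∀ j, 0 < β j) (hx : 0 ≤ x) :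
    ∫⁻ S in Set.Ioi (0 : ℝ), ENNReal.ofReal (S ^ n) * ∏ j, frechetPDF (β j) τ ((S • x) j) =
      ENNReal.ofReal (concreteDensity (n + 1) β τ x) := by
  by_cases hpos : ∀ j, 0 < x j
  · exact lintegral_pow_mul_prod_frechetPDF_smul_of_pos hτ hβ hpos
  obtain ⟨j, hj⟩ := not_forall.mp hpos
  have hj : x j = 0 := le_antisymm (not_lt.mp hj) (hx j)
  rw [concreteDensity_eq_zero (by positivity) hj, ENNReal.ofReal_zero]
  refine setLIntegral_eq_zero measurableSet_Ioi fun S _ ↦ ?_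
  have hzero : frechetPDF (β j) τ ((S • x) j) = 0 :=
    frechetPDF_of_nonpos (by rw [Pi.smul_apply, hj, smul_zero])
  rw [prod_eq_zero (mem_univ j) hzero, mul_zero, Pi.zero_apply]

lemma measurePreserving_normalize_pi_frechetMeasure (hτ : 0 < τ) (hβ : ∀ j, 0 < β j) :
    MeasurePreserving (fun y ↦ (∑ j, y j)⁻¹ • y) (Measure.pi fun j ↦ frechetMeasure (β j) τ)
      (concreteMeasure (n + 1) β τ) := by
  have hnormalize : Measurable fun y : Fin (n + 1) → ℝ ↦ (∑ j, y j)⁻¹ • y := by fun_prop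
  refine ⟨hnormalize, Measure.ext_of_lintegral _ fun g hg ↦ ?_⟩
  have hg_normalize : Measurable fun y : Fin (n + 1) → ℝ ↦ g ((∑ j, y j)⁻¹ • y) :=
    hg.comp hnormalize
  have hintegrand : Measurable fun y : Fin (n + 1) → ℝ ↦
      (∏ j, frechetPDF (β j) τ (y j)) * g ((∑ j, y j)⁻¹ • y) :=
    (measurable_prod_frechetPDF β τ).mul hg_normalize
  rw [lintegral_map hg hnormalize, lintegral_pi_frechetMeasure hg_normalize,
    setLIntegral_Ioi_eq_lintegral_simplexMeasure hintegrand, concreteMeasure,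
    lintegral_withDensity_eq_lintegral_mul _ (measurable_concreteDensity _ _ _).ennreal_ofReal hg]
  refine lintegral_congr_ae ?_
  filter_upwards [ae_simplexMeasure_nonneg, ae_simplexMeasure_sum_eq_one] with x hx hsum
  have hradial {S : ℝ} (hS : 0 < S) : (∑ j, (S • x) j)⁻¹ • S • x = x := by
    simp only [Pi.smul_apply, smul_eq_mul, ← mul_sum, hsum, mul_one, inv_smul_smul₀ hS.ne']
  have hpdf_smul : Measurable fun S : ℝ ↦
      ENNReal.ofReal (S ^ n) * ∏ j, frechetPDF (β j) τ ((S • x) j) :=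
    Measurable.mul (by fun_prop)
      ((measurable_prod_frechetPDF β τ).comp (measurable_id.smul_const x))
  rw [Pi.mul_apply, ← lintegral_pow_mul_prod_frechetPDF_smul hτ hβ hx,
    ← lintegral_mul_const _ hpdf_smul]
  refine setLIntegral_congr_fun measurableSet_Ioi fun S hS ↦ ?_
  simp only [hradial hS, mul_assoc]

end Normalization

section LogRatioVariance

variable {n : ℕ} {β : Fin (n + 1) → ℝ} {τ : ℝ}

lemma log_div_normalize_ae_eq_pi_frechetMeasure (hτ : 0 < τ) (hβ : ∀ j, 0 < β j)
    (i k : Fin (n + 1)) :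
    (fun y ↦ Real.log (((∑ j, y j)⁻¹ • y) i / ((∑ j, y j)⁻¹ • y) k))
      =ᵐ[Measure.pi fun j ↦ frechetMeasure (β j) τ]
      fun y ↦ Real.log (y i) - Real.log (y k) := by
  filter_upwards [ae_pos_pi_frechetMeasure hτ hβ] with y hy
  have hsum : 0 < ∑ j, y j := sum_pos (fun j _ ↦ hy j) univ_nonempty
  simp only [Pi.smul_apply, smul_eq_mul]
  rw [mul_div_mul_left _ _ (inv_pos.mpr hsum).ne', Real.log_div (hy i).ne' (hy k).ne']

lemma isProbabilityMeasure_concreteMeasure (hτ : 0 < τ) (hβ : ∀ j, 0 < β j) :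
    IsProbabilityMeasure (concreteMeasure (n + 1) β τ) := by
  have (j : Fin (n + 1)) := isProbabilityMeasure_frechetMeasure (hβ j) hτ
  have hnormalize := measurePreserving_normalize_pi_frechetMeasure hτ hβ
  rw [← hnormalize.map_eq]
  exact Measure.isProbabilityMeasure_map hnormalize.aemeasurable

lemma memLp_log_div_concreteMeasure (hτ : 0 < τ) (hβ : ∀ j, 0 < β j) (i k : Fin (n + 1)) :
    MemLp (fun x ↦ Real.log (x i / x k)) 2 (concreteMeasure (n + 1) β τ) := by
  have hnormalize := measurePreserving_normalize_pi_frechetMeasure hτ hβ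
  have hlog : Measurable fun x : Fin (n + 1) → ℝ ↦ Real.log (x i / x k) := by fun_prop
  rw [← hnormalize.map_eq, memLp_map_measure_iff hlog.aestronglyMeasurable hnormalize.aemeasurable]
  exact ((memLp_log_eval_pi_frechetMeasure hτ hβ i).sub
    (memLp_log_eval_pi_frechetMeasure hτ hβ k)).ae_eq
      (log_div_normalize_ae_eq_pi_frechetMeasure hτ hβ i k).symm

lemma variance_log_div_concreteMeasure (hτ : 0 < τ) (hβ : ∀ j, 0 < β j) {i k : Fin (n + 1)}
    (hik : i ≠ k) :
    Var[fun x ↦ Real.log (x i / x k); concreteMeasure (n + 1) β τ] =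
      Real.pi ^ 2 / (3 * τ ^ 2) := by
  have hnormalize := measurePreserving_normalize_pi_frechetMeasure hτ hβ
  have hlog : Measurable fun x : Fin (n + 1) → ℝ ↦ Real.log (x i / x k) := by fun_prop
  rw [← hnormalize.variance_fun_comp hlog.aemeasurable,
    variance_congr (log_div_normalize_ae_eq_pi_frechetMeasure hτ hβ i k),
    variance_log_sub_log_pi_frechetMeasure hτ hβ hik]

lemma integral_concreteMeasure (hτ : 0 ≤ τ) (hβ : 0 ≤ β) (g : (Fin (n + 1) → ℝ) → ℝ) :
    ∫ x, g x ∂concreteMeasure (n + 1) β τ =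
      ∫ x, g x * concreteDensity (n + 1) β τ x ∂simplexMeasure (n + 1) := by
  refine integral_withDensity_ofReal (measurable_concreteDensity _ _ _) ?_ g
  filter_upwards [ae_simplexMeasure_nonneg] with x hx
  exact concreteDensity_nonneg hτ hβ hx

end LogRatioVariance

/-- Log-ratio variances of the Concrete distribution:
`Var[log(X_i/X_k)] = (π²/(3τ²))(1 − δ_ik)`. -/
theorem concrete_log_ratio_variance
    (K : ℕ) (hK : 2 ≤ K) (τ : ℝ) (hτ : 0 < τ)
    (β : Fin K → ℝ) (hβ : ∀ i, 0 < β i) (i k : Fin K) :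
    (∫ x, Real.log (x i / x k) ^ 2 * concreteDensity K β τ x ∂(simplexMeasure K))
      - (∫ x, Real.log (x i / x k) * concreteDensity K β τ x ∂(simplexMeasure K)) ^ 2
      = (Real.pi ^ 2 / (3 * τ ^ 2)) * (1 - kd i k) := by
  obtain ⟨n, rfl⟩ : ∃ n, K = n + 1 := Nat.exists_eq_add_of_le' (Nat.one_le_of_lt hK)
  rcases eq_or_ne i k with rfl | hik
  · simp [kd]
  have := isProbabilityMeasure_concreteMeasure hτ hβ
  have hβ_nonneg : 0 ≤ β := fun j ↦ (hβ j).le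
  have hvar := variance_eq_sub (memLp_log_div_concreteMeasure hτ hβ i k)
  simp only [Pi.pow_apply, integral_concreteMeasure hτ.le hβ_nonneg] at hvar
  rw [← hvar, variance_log_div_concreteMeasure hτ hβ hik, kd, if_neg hik, sub_zero, mul_one]
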